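/- For every ν ≥ 1/2 and every x > 0, K_{ν+1}(x)/K_ν(x) ≤ (ν + 1/2 + √(ν² − 1/4 + x²))/x, with strict inequality when ν > 1/2 (when ν = 1/2 the two sides are identically equal). -/

import Mathlib

/-- The modified Bessel function of the second kind,
`K_ν(x) = ∫_0^∞ e^{-x cosh t} cosh(ν t) dt`. -/
noncomputable def besselK (ν x : ℝ) : ℝ :=
  ∫ t in Set.Ioi (0 : ℝ), Real.exp (-x * Real.cosh t) * Real.cosh (ν * t)

/-!
For `1 / 2 < |ν|`, put `s(x) = √(ν² - 1/4 + x²)` and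
`G(x) = x K_{ν+1}(x) - (ν + 1/2 + s(x)) K_ν(x)`; the claim is `G < 0`. The recurrences for `K_ν`
give `x G' = (1/2 + s) G + ((ν² - 1/4) / s) K_ν`, so `G` is strictly increasing wherever it is
nonnegative. If `G` were nonnegative somewhere it would therefore stay so and keep increasing,
whereas the exponential decay of `K_ν` forbids a positive lower bound for `G` at infinity.
For `|ν| = 1 / 2` the symmetry `K_{-1/2} = K_{1/2}` makes the recurrence give the ratio exactly.
-/

open Filter MeasureTheory Real Set
open scoped Topology

theorem neg_of_hasDerivAt_pos_of_nonneg {f f' : ℝ → ℝ} {a : ℝ}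
    (hderiv : ∀ y, a < y → HasDerivAt f (f' y) y) (hpos : ∀ y, a < y → 0 ≤ f y → 0 < f' y)
    (hfreq : ∀ ε, 0 < ε → ∃ᶠ y in atTop, f y < ε) {x : ℝ} (hx : a < x) : f x < 0 := by
  by_contra! hfx
  have hcont : ContinuousOn f (Ici x) := fun y hy =>
    (hderiv y (hx.trans_le hy)).continuousAt.continuousWithinAt
  have hnonneg : ∀ y, x ≤ y → 0 ≤ f y := fun y hxy =>
    image_le_of_deriv_right_lt_deriv_boundary' (f := fun _ => 0) (f' := fun _ => 0)
      continuousOn_const (fun z _ => hasDerivWithinAt_const ..) hfx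
      (hcont.mono Icc_subset_Ici_self)
      (fun z hz => (hderiv z (hx.trans_le hz.1)).hasDerivWithinAt)
      (fun z hz hfz => hpos z (hx.trans_le hz.1) hfz.le) ⟨hxy, le_rfl⟩
  have hmono : StrictMonoOn f (Ici x) := by
    refine strictMonoOn_of_hasDerivWithinAt_pos (convex_Ici x) hcont (f' := f') ?_ ?_ <;>
      rw [interior_Ici]
    · exact fun y hy => (hderiv y (hx.trans hy)).hasDerivWithinAt
    · exact fun y hy => hpos y (hx.trans hy) (hnonneg y (le_of_lt hy))
  have hstep : f x < f (x + 1) := hmono self_mem_Ici (by simp) (by simp)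
  obtain ⟨y, hlt, hy⟩ :=
    ((hfreq (f (x + 1)) (by linarith)).and_eventually (eventually_ge_atTop (x + 1))).exists
  exact hlt.not_ge (hmono.monotoneOn (by simp) ((by simp : x ≤ x + 1).trans hy) hy)

theorem cosh_le_exp_abs (u : ℝ) : cosh u ≤ exp |u| := by
  rw [← cosh_abs, ← sub_nonneg, exp_sub_cosh]
  exact sinh_nonneg_iff.2 (abs_nonneg u)

theorem abs_sinh_le_exp_abs (u : ℝ) : |sinh u| ≤ exp |u| := by
  rw [abs_sinh, ← sub_nonneg, exp_sub_sinh]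
  exact (cosh_pos _).le

theorem tendsto_exp_neg_mul_cosh_mul_exp {x : ℝ} (hx : 0 < x) (b : ℝ) :
    Tendsto (fun t => exp (-x * cosh t) * exp (b * t)) atTop (𝓝 0) := by
  have hquad : Tendsto (fun t : ℝ => t * (x / 4 * t - b)) atTop atTop :=
    tendsto_id.atTop_mul_atTop₀
      (tendsto_atTop_add_const_right _ (-b) (tendsto_id.const_mul_atTop (by positivity)))
  have hcosh : Tendsto (fun t => x * cosh t - b * t) atTop atTop := by
    refine tendsto_atTop_mono' _ ?_ hquad
    filter_upwards [eventually_ge_atTop 0] with t ht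
    have hsq : t ^ 2 / 4 ≤ cosh t := by
      rw [cosh_eq]
      linarith [quadratic_le_exp_of_nonneg ht, exp_pos (-t)]
    linarith [mul_le_mul_of_nonneg_left hsq hx.le]
  refine (tendsto_exp_neg_atTop_nhds_zero.comp hcosh).congr fun t => ?_
  rw [Function.comp_apply, ← exp_add]
  ring_nf

/-- The integrand `e^{-x cosh t} cosh(ν t)` of `K_ν(x)`. -/
noncomputable def besselKIntegrand (ν x t : ℝ) : ℝ :=
  exp (-x * cosh t) * cosh (ν * t)

theorem besselKIntegrand_pos (ν x t : ℝ) : 0 < besselKIntegrand ν x t :=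
  mul_pos (exp_pos _) (cosh_pos _)

theorem continuous_besselKIntegrand (ν x : ℝ) : Continuous (besselKIntegrand ν x) := by
  unfold besselKIntegrand
  fun_prop

theorem besselKIntegrand_le_exp_sub_mul {x y : ℝ} (hyx : y ≤ x) (ν t : ℝ) :
    besselKIntegrand ν x t ≤ exp (y - x) * besselKIntegrand ν y t := by
  have hexp : -x * cosh t ≤ y - x + -y * cosh t := by
    linarith [mul_le_mul_of_nonneg_left (one_le_cosh t) (sub_nonneg.2 hyx)]
  rw [besselKIntegrand, besselKIntegrand, ← mul_assoc, ← exp_add]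
  exact mul_le_mul_of_nonneg_right (exp_le_exp.2 hexp) (cosh_pos _).le

theorem antitone_besselKIntegrand (ν t : ℝ) : Antitone fun x => besselKIntegrand ν x t := by
  intro y x hyx
  exact (besselKIntegrand_le_exp_sub_mul hyx ν t).trans
    (mul_le_of_le_one_left (besselKIntegrand_pos ν y t).le (exp_le_one_iff.2 (sub_nonpos.2 hyx)))

theorem integrableOn_besselKIntegrand (ν : ℝ) {x : ℝ} (hx : 0 < x) :
    IntegrableOn (besselKIntegrand ν x) (Ioi 0) := by
  refine integrable_of_isBigO_exp_neg one_pos (continuous_besselKIntegrand ν x).continuousOn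
    (Asymptotics.IsBigO.of_norm_eventuallyLE ?_)
  filter_upwards [eventually_ge_atTop 0,
    (tendsto_exp_neg_mul_cosh_mul_exp hx (|ν| + 1)).eventually_le_const one_pos] with t ht hle
  calc ‖besselKIntegrand ν x t‖
      = exp (-x * cosh t) * cosh (ν * t) := norm_of_nonneg (besselKIntegrand_pos ν x t).le
    _ ≤ exp (-x * cosh t) * exp (|ν| * t) := by
      grw [cosh_le_exp_abs (ν * t), abs_mul, abs_of_nonneg ht]
    _ = exp (-x * cosh t) * exp ((|ν| + 1) * t) * exp (-1 * t) := by
      simp only [← exp_add]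
      ring_nf
    _ ≤ exp (-1 * t) := mul_le_of_le_one_left (exp_pos _).le hle

theorem hasDerivAt_besselKIntegrand (ν x t : ℝ) :
    HasDerivAt (fun y => besselKIntegrand ν y t)
      (-(besselKIntegrand (ν + 1) x t + besselKIntegrand (ν - 1) x t) / 2) x := by
  refine (((hasDerivAt_neg x).mul_const (cosh t)).exp.mul_const (cosh (ν * t))).congr_deriv ?_
  simp only [besselKIntegrand, add_mul, sub_mul, one_mul, cosh_add, cosh_sub]
  ring

theorem hasDerivAt_exp_neg_mul_cosh_mul_sinh (ν x t : ℝ) :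
    HasDerivAt (fun t => exp (-x * cosh t) * sinh (ν * t))
      (ν * besselKIntegrand ν x t -
        x / 2 * (besselKIntegrand (ν + 1) x t - besselKIntegrand (ν - 1) x t)) t := by
  refine (((hasDerivAt_cosh t).const_mul (-x)).exp.mul
    (hasDerivAt_const_mul ν).sinh).congr_deriv ?_
  simp only [besselKIntegrand, add_mul, sub_mul, one_mul, cosh_add, cosh_sub]
  ring

theorem tendsto_exp_neg_mul_cosh_mul_sinh (ν : ℝ) {x : ℝ} (hx : 0 < x) :
    Tendsto (fun t => exp (-x * cosh t) * sinh (ν * t)) atTop (𝓝 0) := by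
  refine squeeze_zero_norm' ?_ (tendsto_exp_neg_mul_cosh_mul_exp hx |ν|)
  filter_upwards [eventually_ge_atTop 0] with t ht
  rw [norm_mul, norm_of_nonneg (exp_pos _).le, norm_eq_abs]
  grw [abs_sinh_le_exp_abs, abs_mul, abs_of_nonneg ht]

theorem besselK_eq_integral_besselKIntegrand (ν x : ℝ) :
    besselK ν x = ∫ t in Ioi 0, besselKIntegrand ν x t :=
  rfl

theorem besselK_neg (ν x : ℝ) : besselK (-ν) x = besselK ν x := by
  simp only [besselK, neg_mul, cosh_neg]

theorem besselK_pos (ν : ℝ) {x : ℝ} (hx : 0 < x) : 0 < besselK ν x := by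
  have hsupport : Function.support (besselKIntegrand ν x) = univ :=
    Function.support_eq_univ fun t => (besselKIntegrand_pos ν x t).ne'
  rw [besselK_eq_integral_besselKIntegrand, setIntegral_pos_iff_support_of_nonneg_ae
    (Eventually.of_forall fun t => (besselKIntegrand_pos ν x t).le)
    (integrableOn_besselKIntegrand ν hx), hsupport]
  simp

theorem mul_besselK_add_one_sub_besselK_sub_one (ν : ℝ) {x : ℝ} (hx : 0 < x) :
    x * (besselK (ν + 1) x - besselK (ν - 1) x) = 2 * ν * besselK ν x := by
  have hint := fun μ => integrableOn_besselKIntegrand μ hx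
  have hdiff : IntegrableOn
      (fun t => besselKIntegrand (ν + 1) x t - besselKIntegrand (ν - 1) x t) (Ioi 0) :=
    (hint (ν + 1)).sub (hint (ν - 1))
  have hparts := integral_Ioi_of_hasDerivAt_of_tendsto' (a := 0)
    (fun t _ => hasDerivAt_exp_neg_mul_cosh_mul_sinh ν x t)
    (((hint ν).const_mul ν).sub (hdiff.const_mul (x / 2)))
    (tendsto_exp_neg_mul_cosh_mul_sinh ν hx)
  rw [integral_sub ((hint ν).const_mul ν) (hdiff.const_mul (x / 2)), integral_const_mul,
    integral_const_mul, integral_sub (hint (ν + 1)) (hint (ν - 1))] at hparts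
  simp only [← besselK_eq_integral_besselKIntegrand, mul_zero, sinh_zero, sub_zero] at hparts
  linarith

theorem hasDerivAt_besselK (ν : ℝ) {x : ℝ} (hx : 0 < x) :
    HasDerivAt (besselK ν) (-(besselK (ν + 1) x + besselK (ν - 1) x) / 2) x := by
  have hint := fun {y} (hy : 0 < y) μ => integrableOn_besselKIntegrand μ hy
  have hderiv := (hasDerivAt_integral_of_dominated_loc_of_deriv_le
    (μ := volume.restrict (Ioi (0 : ℝ))) (F := besselKIntegrand ν)
    (F' := fun y t => -(besselKIntegrand (ν + 1) y t + besselKIntegrand (ν - 1) y t) / 2)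
    (bound := fun t =>
      (besselKIntegrand (ν + 1) (x / 2) t + besselKIntegrand (ν - 1) (x / 2) t) / 2)
    (Ioi_mem_nhds (half_lt_self hx))
    (Eventually.of_forall fun y => (continuous_besselKIntegrand ν y).aestronglyMeasurable)
    (hint hx ν)
    (((hint hx (ν + 1)).add (hint hx (ν - 1))).neg.div_const 2).aestronglyMeasurable
    (Eventually.of_forall fun t y hy => ?_)
    (((hint (half_pos hx) (ν + 1)).add (hint (half_pos hx) (ν - 1))).div_const 2)
    (Eventually.of_forall fun t y _ => hasDerivAt_besselKIntegrand ν y t)).2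
  · rwa [integral_div, integral_neg, integral_add (hint hx (ν + 1)) (hint hx (ν - 1))] at hderiv
  · have hxy : x / 2 ≤ y := le_of_lt hy
    have hpos := fun μ => besselKIntegrand_pos μ y t
    rw [neg_div, norm_neg, norm_of_nonneg (by linarith [hpos (ν + 1), hpos (ν - 1)])]
    linarith [antitone_besselKIntegrand (ν + 1) t hxy, antitone_besselKIntegrand (ν - 1) t hxy]

theorem hasDerivAt_besselK_of_add_one (ν : ℝ) {x : ℝ} (hx : 0 < x) :
    HasDerivAt (besselK ν) (ν / x * besselK ν x - besselK (ν + 1) x) x := by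
  refine (hasDerivAt_besselK ν hx).congr_deriv ?_
  field_simp
  linear_combination mul_besselK_add_one_sub_besselK_sub_one ν hx

theorem hasDerivAt_besselK_of_sub_one (ν : ℝ) {x : ℝ} (hx : 0 < x) :
    HasDerivAt (besselK ν) (-besselK (ν - 1) x - ν / x * besselK ν x) x := by
  refine (hasDerivAt_besselK ν hx).congr_deriv ?_
  field_simp
  linear_combination -mul_besselK_add_one_sub_besselK_sub_one ν hx

theorem besselK_le_exp_sub_mul (ν : ℝ) {x y : ℝ} (hy : 0 < y) (hyx : y ≤ x) :
    besselK ν x ≤ exp (y - x) * besselK ν y := by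
  simp only [besselK_eq_integral_besselKIntegrand, ← integral_const_mul]
  exact integral_mono (integrableOn_besselKIntegrand ν (hy.trans_le hyx))
    ((integrableOn_besselKIntegrand ν hy).const_mul _) (besselKIntegrand_le_exp_sub_mul hyx ν)

theorem tendsto_pow_mul_besselK_atTop (n : ℕ) (ν : ℝ) :
    Tendsto (fun x => x ^ n * besselK ν x) atTop (𝓝 0) := by
  have hlim : Tendsto (fun x => x ^ n * exp (-x) * (exp 1 * besselK ν 1)) atTop (𝓝 0) := by
    simpa using (tendsto_pow_mul_exp_neg_atTop_nhds_zero n).mul_const (exp 1 * besselK ν 1)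
  refine squeeze_zero' ?_ ?_ hlim <;> filter_upwards [eventually_ge_atTop 1] with x hx
  · have := besselK_pos ν (zero_lt_one.trans_le hx)
    positivity
  · calc x ^ n * besselK ν x
        ≤ x ^ n * (exp (1 - x) * besselK ν 1) := by
          gcongr
          exact besselK_le_exp_sub_mul ν one_pos hx
      _ = x ^ n * exp (-x) * (exp 1 * besselK ν 1) := by
          rw [sub_eq_neg_add, exp_add]
          ring

/-- The difference `x K_{ν+1}(x) - (ν + 1/2 + √(ν² - 1/4 + x²)) K_ν(x)` of the two sides of the
ratio bound, cleared of denominators: for `x > 0` the bound holds strictly iff this is negative. -/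
noncomputable def besselKRatioGap (ν x : ℝ) : ℝ :=
  x * besselK (ν + 1) x - (ν + 1 / 2 + √(ν ^ 2 - 1 / 4 + x ^ 2)) * besselK ν x

theorem besselK_ratio_lt_iff_besselKRatioGap_neg (ν : ℝ) {x : ℝ} (hx : 0 < x) :
    besselK (ν + 1) x / besselK ν x < (ν + 1 / 2 + √(ν ^ 2 - 1 / 4 + x ^ 2)) / x ↔
      besselKRatioGap ν x < 0 := by
  rw [div_lt_div_iff₀ (besselK_pos ν hx) hx, mul_comm, besselKRatioGap, sub_neg]

theorem hasDerivAt_sqrt_const_add_sq {c x : ℝ} (h : 0 < c + x ^ 2) :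
    HasDerivAt (fun y => √(c + y ^ 2)) (x / √(c + x ^ 2)) x := by
  refine (((hasDerivAt_pow 2 x).const_add c).sqrt h.ne').congr_deriv ?_
  field_simp
  norm_num

theorem hasDerivAt_besselKRatioGap {ν x : ℝ} (hx : 0 < x) (hs : 0 < ν ^ 2 - 1 / 4 + x ^ 2) :
    HasDerivAt (besselKRatioGap ν)
      (((1 / 2 + √(ν ^ 2 - 1 / 4 + x ^ 2)) * besselKRatioGap ν x +
        (ν ^ 2 - 1 / 4) / √(ν ^ 2 - 1 / 4 + x ^ 2) * besselK ν x) / x) x := by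
  have hsucc := hasDerivAt_besselK_of_sub_one (ν + 1) hx
  rw [add_sub_cancel_right] at hsucc
  refine (((hasDerivAt_id' x).mul hsucc).sub
    (((hasDerivAt_sqrt_const_add_sq hs).const_add (ν + 1 / 2)).mul
      (hasDerivAt_besselK_of_add_one ν hx))).congr_deriv ?_
  have hsq := sq_sqrt hs.le
  have hsqrt := sqrt_pos.2 hs
  simp only [besselKRatioGap]
  set s := √(ν ^ 2 - 1 / 4 + x ^ 2)
  rw [show ν ^ 2 - 1 / 4 = s ^ 2 - x ^ 2 by linarith]
  field_simp
  linear_combination 4 * besselK ν x * s * hsq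

theorem frequently_besselKRatioGap_lt (ν : ℝ) {ε : ℝ} (hε : 0 < ε) :
    ∃ᶠ x in atTop, besselKRatioGap ν x < ε := by
  have hlim : Tendsto (fun x => x * besselK (ν + 1) x - (ν + 1 / 2) * besselK ν x) atTop
      (𝓝 0) := by
    simpa using (tendsto_pow_mul_besselK_atTop 1 (ν + 1)).sub
      ((tendsto_pow_mul_besselK_atTop 0 ν).const_mul (ν + 1 / 2))
  refine Eventually.frequently ?_
  filter_upwards [hlim.eventually_lt_const hε, eventually_gt_atTop 0] with x hlt hx
  have := mul_nonneg (sqrt_nonneg (ν ^ 2 - 1 / 4 + x ^ 2)) (besselK_pos ν hx).le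
  rw [besselKRatioGap]
  linarith

theorem besselKRatioGap_neg {ν x : ℝ} (hν : 1 / 2 < |ν|) (hx : 0 < x) :
    besselKRatioGap ν x < 0 := by
  have hν' : 0 < ν ^ 2 - 1 / 4 := by
    nlinarith [sq_abs ν]
  refine neg_of_hasDerivAt_pos_of_nonneg
    (fun y hy => hasDerivAt_besselKRatioGap hy (by positivity)) (fun y hy hgap => ?_)
    (fun ε hε => frequently_besselKRatioGap_lt ν hε) hx
  have := besselK_pos ν hy
  positivity

theorem besselK_ratio_of_abs_eq_half {ν x : ℝ} (hν : |ν| = 1 / 2) (hx : 0 < x) :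
    besselK (ν + 1) x / besselK ν x = (ν + 1 / 2 + √(ν ^ 2 - 1 / 4 + x ^ 2)) / x := by
  have hsqrt : √(ν ^ 2 - 1 / 4 + x ^ 2) = x := by
    rw [← sq_abs ν, hν, show ((1 : ℝ) / 2) ^ 2 - 1 / 4 + x ^ 2 = x ^ 2 by ring, sqrt_sq hx.le]
  rw [hsqrt, div_eq_div_iff (besselK_pos ν hx).ne' hx.ne']
  obtain rfl | rfl := (abs_eq (by norm_num)).1 hν
  · have hrec := mul_besselK_add_one_sub_besselK_sub_one (1 / 2) hx
    rw [show (1 / 2 - 1 : ℝ) = -(1 / 2) by norm_num, besselK_neg] at hrec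
    linarith
  · rw [show (-(1 / 2) + 1 : ℝ) = 1 / 2 by norm_num, besselK_neg]
    ring

theorem besselK_ratio_upper_bound_03_general (ν x : ℝ) (hν : 1 / 2 ≤ |ν|) (hx : 0 < x) :
    (besselK (ν + 1) x / besselK ν x ≤ (ν + 1 / 2 + √(ν ^ 2 - 1 / 4 + x ^ 2)) / x) ∧
    (1 / 2 < |ν| →
      besselK (ν + 1) x / besselK ν x < (ν + 1 / 2 + √(ν ^ 2 - 1 / 4 + x ^ 2)) / x) ∧
    (|ν| = 1 / 2 →
      besselK (ν + 1) x / besselK ν x = (ν + 1 / 2 + √(ν ^ 2 - 1 / 4 + x ^ 2)) / x) := by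
  have hlt (h : 1 / 2 < |ν|) :=
    (besselK_ratio_lt_iff_besselKRatioGap_neg ν hx).2 (besselKRatioGap_neg h hx)
  have heq (h : |ν| = 1 / 2) := besselK_ratio_of_abs_eq_half h hx
  exact ⟨hν.lt_or_eq.elim (fun h => (hlt h).le) (fun h => (heq h.symm).le), hlt, heq⟩

theorem besselK_ratio_upper_bound_03 (ν x : ℝ) (hν : 1 / 2 ≤ ν) (hx : 0 < x) :
    (besselK (ν + 1) x / besselK ν x ≤
      (ν + 1 / 2 + Real.sqrt (ν ^ 2 - 1 / 4 + x ^ 2)) / x) ∧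
    (1 / 2 < ν →
      besselK (ν + 1) x / besselK ν x <
        (ν + 1 / 2 + Real.sqrt (ν ^ 2 - 1 / 4 + x ^ 2)) / x) ∧
    (ν = 1 / 2 →
      besselK (ν + 1) x / besselK ν x =
        (ν + 1 / 2 + Real.sqrt (ν ^ 2 - 1 / 4 + x ^ 2)) / x) := by
  have habs : |ν| = ν := abs_of_nonneg (by linarith)
  simpa only [habs] using besselK_ratio_upper_bound_03_general ν x (habs.symm ▸ hν) hx
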